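/- For every z ∈ ℝ^m × ℝ^n, the following quadratic inequality holds: μ‖z − z*‖² − 2⟨z − z*, Φ(z)⟩ + (μ/(4L²))‖Φ(z)‖² ≤ 0. -/

import Mathlib

open MeasureTheory ProbabilityTheory Real
open scoped RealInnerProductSpace

noncomputable section

/-
Strong convexity in `x` and strong concavity in `y` make the operator `Φ = (∇ₓ f, -∇ᵧ f)` strongly
monotone with constant `μ`: write the first-order inequalities along the four sides of the rectangle
with opposite corners `z` and `w`, based at these corners; in their sum all values of `f` cancel.
The partial Lipschitz bounds make `Φ` Lipschitz with constant `2L`. At a zero `w` of `Φ` this reads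
`μ‖z - w‖² ≤ ⟪z - w, Φ z⟫` and `‖Φ z‖ ≤ 2L‖z - w‖`, so the three terms of the quadratic form are at
most `1`, `-2` and `1` times `μ‖z - w‖²`.
-/

theorem mul_sq_norm_sub_two_mul_inner_add_div_mul_sq_norm_nonpos {E : Type*}
    [NormedAddCommGroup E] [InnerProductSpace ℝ E] {μ K : ℝ} (hμ : 0 ≤ μ) (hK : 0 < K) {u v : E}
    (hinner : μ * ‖u‖ ^ 2 ≤ ⟪u, v⟫) (hnorm : ‖v‖ ≤ K * ‖u‖) :
    μ * ‖u‖ ^ 2 - 2 * ⟪u, v⟫ + μ / K ^ 2 * ‖v‖ ^ 2 ≤ 0 := by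
  have hquad : μ / K ^ 2 * ‖v‖ ^ 2 ≤ μ * ‖u‖ ^ 2 :=
    calc μ / K ^ 2 * ‖v‖ ^ 2 ≤ μ / K ^ 2 * (K * ‖u‖) ^ 2 := by gcongr
      _ = μ * ‖u‖ ^ 2 := by field_simp
  linarith

section PartialLipschitz

variable {E F G : Type*} [SeminormedAddCommGroup E] [SeminormedAddCommGroup F]
  [SeminormedAddCommGroup G] {L : ℝ} {g : E → F → G}

theorem norm_sub_le_mul_add_of_partial_lipschitz
    (hx : ∀ y x x', ‖g x y - g x' y‖ ≤ L * ‖x - x'‖)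
    (hy : ∀ x y y', ‖g x y - g x y'‖ ≤ L * ‖y - y'‖) (x x' : E) (y y' : F) :
    ‖g x y - g x' y'‖ ≤ L * (‖x - x'‖ + ‖y - y'‖) :=
  calc ‖g x y - g x' y'‖
      ≤ ‖g x y - g x' y‖ + ‖g x' y - g x' y'‖ := norm_sub_le_norm_sub_add_norm_sub ..
    _ ≤ L * ‖x - x'‖ + L * ‖y - y'‖ := add_le_add (hx y x x') (hy x' y y')
    _ = L * (‖x - x'‖ + ‖y - y'‖) := (mul_add ..).symm

theorem sq_norm_sub_le_of_partial_lipschitz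
    (hx : ∀ y x x', ‖g x y - g x' y‖ ≤ L * ‖x - x'‖)
    (hy : ∀ x y y', ‖g x y - g x y'‖ ≤ L * ‖y - y'‖) (x x' : E) (y y' : F) :
    ‖g x y - g x' y'‖ ^ 2 ≤ 2 * L ^ 2 * (‖x - x'‖ ^ 2 + ‖y - y'‖ ^ 2) :=
  calc ‖g x y - g x' y'‖ ^ 2
      ≤ (L * (‖x - x'‖ + ‖y - y'‖)) ^ 2 := by
        gcongr
        exact norm_sub_le_mul_add_of_partial_lipschitz hx hy x x' y y'
    _ = L ^ 2 * (‖x - x'‖ + ‖y - y'‖) ^ 2 := mul_pow ..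
    _ ≤ L ^ 2 * (2 * (‖x - x'‖ ^ 2 + ‖y - y'‖ ^ 2)) := by
        gcongr
        exact add_sq_le
    _ = 2 * L ^ 2 * (‖x - x'‖ ^ 2 + ‖y - y'‖ ^ 2) := by ring

end PartialLipschitz

/-- The operator `Φ (x, y) = (∇ₓ f (x, y), -∇ᵧ f (x, y))` of a saddle-point problem, with the
partial gradients `Fx` and `Fy` of `f` as data. The type `WithLp 2 (E × F)` is the product with the
Euclidean norm `‖(x, y)‖² = ‖x‖² + ‖y‖²`. -/
def saddleOperator {E F : Type*} [Neg F] (Fx : E → F → E) (Fy : E → F → F)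
    (z : WithLp 2 (E × F)) : WithLp 2 (E × F) :=
  WithLp.toLp 2 (Fx z.fst z.snd, -Fy z.fst z.snd)

section Lipschitz

variable {E F : Type*} [SeminormedAddCommGroup E] [SeminormedAddCommGroup F]

theorem norm_saddleOperator_sub_le {L : ℝ} (hL : 0 ≤ L) {Fx : E → F → E} {Fy : E → F → F}
    (hxx : ∀ y x x', ‖Fx x y - Fx x' y‖ ≤ L * ‖x - x'‖)
    (hxy : ∀ x y y', ‖Fx x y - Fx x y'‖ ≤ L * ‖y - y'‖)
    (hyx : ∀ y x x', ‖Fy x y - Fy x' y‖ ≤ L * ‖x - x'‖)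
    (hyy : ∀ x y y', ‖Fy x y - Fy x y'‖ ≤ L * ‖y - y'‖) (z w : WithLp 2 (E × F)) :
    ‖saddleOperator Fx Fy z - saddleOperator Fx Fy w‖ ≤ 2 * L * ‖z - w‖ := by
  have hFx := sq_norm_sub_le_of_partial_lipschitz hxx hxy z.fst w.fst z.snd w.snd
  have hFy := sq_norm_sub_le_of_partial_lipschitz hyx hyy z.fst w.fst z.snd w.snd
  refine le_of_sq_le_sq ?_ (by positivity)
  calc ‖saddleOperator Fx Fy z - saddleOperator Fx Fy w‖ ^ 2
      = ‖Fx z.fst z.snd - Fx w.fst w.snd‖ ^ 2 + ‖Fy z.fst z.snd - Fy w.fst w.snd‖ ^ 2 := by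
        rw [WithLp.prod_norm_sq_eq_of_L2, ← norm_neg (Fy z.fst z.snd - _), neg_sub']
        rfl
    _ ≤ 4 * L ^ 2 * (‖z.fst - w.fst‖ ^ 2 + ‖z.snd - w.snd‖ ^ 2) := by linarith
    _ = (2 * L * ‖z - w‖) ^ 2 := by
        rw [mul_pow, WithLp.prod_norm_sq_eq_of_L2, WithLp.sub_fst, WithLp.sub_snd]
        ring

end Lipschitz

section StronglyConvexConcave

variable {E F : Type*} [NormedAddCommGroup E] [InnerProductSpace ℝ E]
  [NormedAddCommGroup F] [InnerProductSpace ℝ F]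
  {μ : ℝ} {f : E → F → ℝ} {Fx : E → F → E} {Fy : E → F → F}

theorem mul_sq_norm_sub_add_le_inner_sub_add_inner_sub
    (hx : ∀ y x x', μ / 2 * ‖x - x'‖ ^ 2 ≤ f x y - f x' y - ⟪Fx x' y, x - x'⟫)
    (hy : ∀ x y y', μ / 2 * ‖y - y'‖ ^ 2 ≤ -f x y - -f x y' - ⟪-Fy x y', y - y'⟫)
    (x x' : E) (y y' : F) :
    μ * (‖x - x'‖ ^ 2 + ‖y - y'‖ ^ 2) ≤
      ⟪x - x', Fx x y - Fx x' y'⟫ + ⟪y - y', -Fy x y - -Fy x' y'⟫ := by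
  have hx_at_xy := hx y x' x
  have hx_at_x'y' := hx y' x x'
  have hy_at_xy := hy x y' y
  have hy_at_x'y' := hy x' y y'
  rw [norm_sub_rev, ← neg_sub x x', inner_neg_right, real_inner_comm] at hx_at_xy
  rw [norm_sub_rev, ← neg_sub y y', inner_neg_right, real_inner_comm] at hy_at_xy
  rw [real_inner_comm] at hx_at_x'y' hy_at_x'y'
  rw [inner_sub_right, inner_sub_right]
  linarith

theorem mul_sq_norm_sub_le_inner_saddleOperator_sub
    (hx : ∀ y x x', μ / 2 * ‖x - x'‖ ^ 2 ≤ f x y - f x' y - ⟪Fx x' y, x - x'⟫)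
    (hy : ∀ x y y', μ / 2 * ‖y - y'‖ ^ 2 ≤ -f x y - -f x y' - ⟪-Fy x y', y - y'⟫)
    (z w : WithLp 2 (E × F)) :
    μ * ‖z - w‖ ^ 2 ≤ ⟪z - w, saddleOperator Fx Fy z - saddleOperator Fx Fy w⟫ := by
  rw [WithLp.prod_norm_sq_eq_of_L2, WithLp.prod_inner_apply]
  exact mul_sq_norm_sub_add_le_inner_sub_add_inner_sub hx hy z.fst w.fst z.snd w.snd

theorem stmt4_general {L : ℝ} (hμ : 0 ≤ μ) (hL : 0 < L)
    -- `HasGradientAt` exists only in complete spaces, hence `HasFDerivAt` with `innerSL`.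
    (hgradx : ∀ x y, HasFDerivAt (fun x' => f x' y) (innerSL ℝ (Fx x y)) x)
    (hgrady : ∀ x y, HasFDerivAt (fun y' => f x y') (innerSL ℝ (Fy x y)) y)
    (hscx : ∀ y x x', μ / 2 * ‖x - x'‖ ^ 2 ≤ f x y - f x' y - ⟪Fx x' y, x - x'⟫)
    (hsmx : ∀ y x x', ‖Fx x y - Fx x' y‖ ≤ L * ‖x - x'‖)
    (hscy : ∀ x y y', μ / 2 * ‖y - y'‖ ^ 2 ≤ -f x y - -f x y' - ⟪-Fy x y', y - y'⟫)
    (hsmy : ∀ x y y', ‖Fy x y - Fy x y'‖ ≤ L * ‖y - y'‖)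
    (hlxy : ∀ x y y', ‖Fx x y - Fx x y'‖ ≤ L * ‖y - y'‖)
    (hlyx : ∀ y x x', ‖Fy x y - Fy x' y‖ ≤ L * ‖x - x'‖)
    {xs : E} {ys : F} (hxs : Fx xs ys = 0) (hys : Fy xs ys = 0) (x : E) (y : F) :
    μ * (‖x - xs‖ ^ 2 + ‖y - ys‖ ^ 2) -
      2 * (⟪x - xs, Fx x y⟫ + ⟪y - ys, -Fy x y⟫) +
      μ / (4 * L ^ 2) * (‖Fx x y‖ ^ 2 + ‖Fy x y‖ ^ 2) ≤ 0 := by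
  let z : WithLp 2 (E × F) := WithLp.toLp 2 (x, y)
  let w : WithLp 2 (E × F) := WithLp.toLp 2 (xs, ys)
  have hzero : saddleOperator Fx Fy w = 0 := by simp [saddleOperator, w, hxs, hys]
  have hmono := mul_sq_norm_sub_le_inner_saddleOperator_sub hscx hscy z w
  have hlip := norm_saddleOperator_sub_le hL.le hsmx hlxy hlyx hsmy z w
  rw [hzero, sub_zero] at hmono hlip
  have hquad :=
    mul_sq_norm_sub_two_mul_inner_add_div_mul_sq_norm_nonpos hμ (by positivity) hmono hlip
  have hconst : (2 * L) ^ 2 = 4 * L ^ 2 := by ring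
  simpa [hconst, saddleOperator, z, w, WithLp.prod_norm_sq_eq_of_L2, WithLp.prod_inner_apply]
    using hquad

end StronglyConvexConcave

/-- Corollary 1: quadratic inequality at the saddle point. -/
theorem stmt4 {m n : ℕ}
    (μ L : ℝ) (hμ : 0 < μ) (hμL : μ ≤ L)
    (f : EuclideanSpace ℝ (Fin m) → EuclideanSpace ℝ (Fin n) → ℝ)
    (Fx : EuclideanSpace ℝ (Fin m) → EuclideanSpace ℝ (Fin n) → EuclideanSpace ℝ (Fin m))
    (Fy : EuclideanSpace ℝ (Fin m) → EuclideanSpace ℝ (Fin n) → EuclideanSpace ℝ (Fin n))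
    (hgradx : ∀ x y, HasGradientAt (fun x' => f x' y) (Fx x y) x)
    (hgrady : ∀ x y, HasGradientAt (fun y' => f x y') (Fy x y) y)
    (hscx : ∀ y x x', f x y - f x' y - ⟪Fx x' y, x - x'⟫ ≥ μ / 2 * ‖x - x'‖ ^ 2)
    (hsmx : ∀ y x x', ‖Fx x y - Fx x' y‖ ≤ L * ‖x - x'‖)
    (hscy : ∀ x y y', (-f x y) - (-f x y') - ⟪-Fy x y', y - y'⟫ ≥ μ / 2 * ‖y - y'‖ ^ 2)
    (hsmy : ∀ x y y', ‖Fy x y - Fy x y'‖ ≤ L * ‖y - y'‖)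
    (hlxy : ∀ x y y', ‖Fx x y - Fx x y'‖ ≤ L * ‖y - y'‖)
    (hlyx : ∀ y x x', ‖Fy x y - Fy x' y‖ ≤ L * ‖x - x'‖)
    (xs : EuclideanSpace ℝ (Fin m)) (ys : EuclideanSpace ℝ (Fin n))
    (hxs : Fx xs ys = 0) (hys : Fy xs ys = 0)
    :
    ∀ (x : EuclideanSpace ℝ (Fin m)) (y : EuclideanSpace ℝ (Fin n)),
      μ * (‖x - xs‖ ^ 2 + ‖y - ys‖ ^ 2) -
        2 * (⟪x - xs, Fx x y⟫ + ⟪y - ys, -Fy x y⟫) +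
        μ / (4 * L ^ 2) * (‖Fx x y‖ ^ 2 + ‖Fy x y‖ ^ 2) ≤ 0 :=
  stmt4_general hμ.le (hμ.trans_le hμL) hgradx hgrady hscx hsmx hscy hsmy hlxy hlyx hxs hys
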